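/- arXiv:1612.08237 — 3 statements merged into one kernel-verified Lean document; each statement's English description precedes it below -/
import Mathlib

section
/- Let Ω ⊆ ℝ^n be a bounded open set with Lipschitz boundary and s ∈ (0,1). Let (E_k) be a sequence of measurable sets, each s-minimal in Ω, with E_k →loc E for some measurable set E. Then E is s-minimal in Ω and P_s(E,Ω) = lim_{k→∞} P_s(E_k,Ω). -/
open MeasureTheory Set Filter Topology Metric Bornology
open scoped ENNReal NNReal symmDiff

noncomputable def Ls (n : ℕ) (s : ℝ) (A B : Set (EuclideanSpace ℝ (Fin n))) : ℝ≥0∞ :=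
  ∫⁻ x in A, ∫⁻ y in B, ENNReal.ofReal (dist x y ^ (-((n : ℝ) + s)))

noncomputable def Ps (n : ℕ) (s : ℝ) (E Ω : Set (EuclideanSpace ℝ (Fin n))) : ℝ≥0∞ :=
  Ls n s (E ∩ Ω) (Eᶜ ∩ Ω) + Ls n s (E ∩ Ω) (Eᶜ \ Ω) + Ls n s (E \ Ω) (Eᶜ ∩ Ω)

def SMinimal (n : ℕ) (s : ℝ) (E Ω : Set (EuclideanSpace ℝ (Fin n))) : Prop :=
  Ps n s E Ω < ⊤ ∧ ∀ F : Set (EuclideanSpace ℝ (Fin n)), MeasurableSet F →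
    volume ((F \ Ω) ∆ (E \ Ω)) = 0 → Ps n s E Ω ≤ Ps n s F Ω

def LocConv (n : ℕ) (A : ℕ → Set (EuclideanSpace ℝ (Fin n)))
    (B : Set (EuclideanSpace ℝ (Fin n))) : Prop :=
  ∀ K : Set (EuclideanSpace ℝ (Fin n)), IsBounded K →
    Tendsto (fun h => volume ((A h ∆ B) ∩ K)) atTop (𝓝 0)

def HasLipschitzBoundary {n : ℕ} (Ω : Set (EuclideanSpace ℝ (Fin n))) : Prop :=
  ∀ x ∈ frontier Ω, ∃ (U : Set (EuclideanSpace ℝ (Fin n)))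
    (_ : IsOpen U) (_ : x ∈ U)
    (L : EuclideanSpace ℝ (Fin n) ≃ₗᵢ[ℝ] WithLp 2 (EuclideanSpace ℝ (Fin (n - 1)) × ℝ))
    (φ : EuclideanSpace ℝ (Fin (n - 1)) → ℝ) (K : NNReal),
    LipschitzWith K φ ∧
    Ω ∩ U = {y ∈ U | φ (WithLp.equiv 2 _ (L y)).1 < (WithLp.equiv 2 _ (L y)).2} ∧
    frontier Ω ∩ U = {y ∈ U | φ (WithLp.equiv 2 _ (L y)).1 = (WithLp.equiv 2 _ (L y)).2}

namespace SMinAux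

theorem segment_meets_frontier {V : Type*} [NormedAddCommGroup V] [NormedSpace ℝ V]
    {Ω : Set V} (hΩ : IsOpen Ω) {x h : V} (hx : x ∈ Ω) (hy : x + h ∉ Ω) :
    ∃ q ∈ frontier Ω, dist x q ≤ ‖h‖ := by
  by_contra! hcon
  have hseg : ∀ z ∈ segment ℝ x (x + h), dist x z ≤ ‖h‖ := by
    intro z hz
    rw [segment_eq_image'] at hz
    obtain ⟨t, ht, rfl⟩ := hz
    simp only [add_sub_cancel_left, dist_self_add_right, norm_smul, Real.norm_eq_abs,
      abs_of_nonneg ht.1]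
    exact mul_le_of_le_one_left (norm_nonneg _) ht.2
  have hnf : ∀ z ∈ segment ℝ x (x + h), z ∉ frontier Ω := fun z hz hzf =>
    absurd (hseg z hz) (not_le.2 (hcon z hzf))
  have hpre : IsPreconnected (segment ℝ x (x + h)) :=
    (convex_segment x (x + h)).isPreconnected
  obtain ⟨z, -, hz1, hz2⟩ := hpre Ω (closure Ω)ᶜ hΩ isClosed_closure.isOpen_compl
    (fun z hz => by
      by_cases hzc : z ∈ closure Ω
      · left
        by_contra hzo
        exact hnf z hz (by rw [frontier, hΩ.interior_eq]; exact ⟨hzc, hzo⟩)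
      · right; exact hzc)
    ⟨x, left_mem_segment ℝ _ _, hx⟩
    ⟨x + h, right_mem_segment ℝ _ _, fun hc =>
      hnf _ (right_mem_segment ℝ _ _) (by rw [frontier, hΩ.interior_eq]; exact ⟨hc, hy⟩)⟩
  exact hz2 (subset_closure hz1)

theorem graph_tube_volume {m : ℕ} (φ : EuclideanSpace ℝ (Fin m) → ℝ) (K : NNReal)
    (hφ : LipschitzWith K φ) (p : EuclideanSpace ℝ (Fin m)) (t : ℝ) :
    (volume : Measure (EuclideanSpace ℝ (Fin m) × ℝ))
      {z | z.1 ∈ closedBall p 2 ∧ |z.2 - φ z.1| ≤ (1 + K) * t} ≤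
    (volume (closedBall p 2) * ENNReal.ofReal (2 * (1 + K))) * ENNReal.ofReal t := by
  have hm : MeasurableSet {z : EuclideanSpace ℝ (Fin m) × ℝ |
      z.1 ∈ closedBall p 2 ∧ |z.2 - φ z.1| ≤ (1 + K) * t} := by
    have hc := hφ.continuous
    refine IsClosed.measurableSet ?_
    have hcont : Continuous fun z : EuclideanSpace ℝ (Fin m) × ℝ => |z.2 - φ z.1| := by
      fun_prop
    exact (isClosed_closedBall.preimage continuous_fst).inter
      (isClosed_le hcont continuous_const)
  rw [Measure.volume_eq_prod, Measure.prod_apply hm]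
  calc _ ≤ ∫⁻ x, (closedBall p 2).indicator
        (fun _ => ENNReal.ofReal (2 * (1 + K)) * ENNReal.ofReal t) x := by
        refine lintegral_mono fun x => ?_
        by_cases hx : x ∈ closedBall p 2
        · rw [indicator_of_mem hx, ← ENNReal.ofReal_mul (by positivity)]
          have : Prod.mk x ⁻¹' {z : EuclideanSpace ℝ (Fin m) × ℝ |
              z.1 ∈ closedBall p 2 ∧ |z.2 - φ z.1| ≤ (1 + K) * t} ⊆
              closedBall (φ x) ((1 + K) * t) := by
            intro z hz
            rw [mem_closedBall, Real.dist_eq]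
            exact hz.2
          refine (measure_mono this).trans ?_
          rw [Real.volume_closedBall, mul_assoc]
        · rw [indicator_of_notMem hx]
          have : Prod.mk x ⁻¹' {z : EuclideanSpace ℝ (Fin m) × ℝ |
              z.1 ∈ closedBall p 2 ∧ |z.2 - φ z.1| ≤ (1 + K) * t} = ∅ := by
            ext z; simp only [mem_preimage, mem_ofPred_eq, mem_empty_iff_false, iff_false]
            exact fun h => hx h.1
          rw [this]; simp
    _ = _ := by
        rw [lintegral_indicator isClosed_closedBall.measurableSet, setLIntegral_const]
        ring

theorem tube_volume {n : ℕ} {Ω : Set (EuclideanSpace ℝ (Fin n))}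
    (hΩb : IsBounded Ω) (hlip : HasLipschitzBoundary Ω) :
    ∃ C : ℝ≥0∞, C ≠ ⊤ ∧ ∃ t0 : ℝ, 0 < t0 ∧ ∀ t ≤ t0,
      volume {x | ∃ q ∈ frontier Ω, dist x q ≤ t} ≤ C * ENNReal.ofReal t := by
  have hcomp : IsCompact (frontier Ω) := Metric.isCompact_of_isClosed_isBounded
    isClosed_frontier (hΩb.closure.subset frontier_subset_closure)
  refine hcomp.induction_on (p := fun S => ∃ C : ℝ≥0∞, C ≠ ⊤ ∧ ∃ t0 : ℝ, 0 < t0 ∧ ∀ t ≤ t0,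
      volume {x | ∃ q ∈ S, dist x q ≤ t} ≤ C * ENNReal.ofReal t) ?_ ?_ ?_ ?_
  · exact ⟨0, by simp, 1, one_pos, by simp⟩
  · rintro S T hST ⟨C, hC, t0, ht0, h⟩
    refine ⟨C, hC, t0, ht0, fun t ht => (measure_mono ?_).trans (h t ht)⟩
    rintro x ⟨q, hq, hx⟩
    exact ⟨q, hST hq, hx⟩
  · rintro S T ⟨C, hC, t0, ht0, h⟩ ⟨C2, hC2, t2, ht2, hh2⟩
    refine ⟨C + C2, by simp [hC, hC2], min t0 t2, lt_min ht0 ht2, fun t ht => ?_⟩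
    rw [add_mul]
    refine le_trans (measure_mono ?_) ((measure_union_le _ _).trans
      (add_le_add (h t (ht.trans (min_le_left _ _))) (hh2 t (ht.trans (min_le_right _ _)))))
    rintro x ⟨q, hq | hq, hx⟩
    · exact Or.inl ⟨q, hq, hx⟩
    · exact Or.inr ⟨q, hq, hx⟩
  · intro p hp
    obtain ⟨U, hUo, hpU, L, φ, K, hφ, -, hfr⟩ := hlip p hp
    refine ⟨frontier Ω ∩ (U ∩ ball p 1), inter_mem_nhdsWithin _
      ((hUo.inter isOpen_ball).mem_nhds ⟨hpU, mem_ball_self one_pos⟩), ?_⟩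
    have hmp : MeasurePreserving (fun y => WithLp.ofLp (L y)) :=
      (WithLp.volume_preserving_ofLp (EuclideanSpace ℝ (Fin (n - 1))) ℝ).comp
        L.measurePreserving
    refine ⟨volume (closedBall (WithLp.ofLp (L p)).1 2) * ENNReal.ofReal (2 * (1 + K)),
      ENNReal.mul_ne_top measure_closedBall_lt_top.ne ENNReal.ofReal_ne_top, 1, one_pos,
      fun t ht => ?_⟩
    refine le_trans ?_ (graph_tube_volume φ K hφ (WithLp.ofLp (L p)).1 t)
    refine le_trans (measure_mono ?_) (hmp.measure_preimage_le _)
    rintro x ⟨q, ⟨hqf, hqU, hqb⟩, hxq⟩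
    have hqg : φ (WithLp.ofLp (L q)).1 = (WithLp.ofLp (L q)).2 := by
      have : q ∈ frontier Ω ∩ U := ⟨hqf, hqU⟩
      rw [hfr] at this
      exact this.2
    have key1 : ∀ a b, dist (WithLp.ofLp (L a)).1 (WithLp.ofLp (L b)).1 ≤ dist a b := by
      intro a b
      rw [dist_eq_norm, dist_eq_norm, ← L.norm_map (a - b), map_sub]
      exact WithLp.norm_fst_le (p := 2) _ (L a - L b)
    have key2 : ∀ a b, dist (WithLp.ofLp (L a)).2 (WithLp.ofLp (L b)).2 ≤ dist a b := by
      intro a b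
      rw [dist_eq_norm, dist_eq_norm, ← L.norm_map (a - b), map_sub]
      exact WithLp.norm_snd_le (p := 2) _ (L a - L b)
    refine ⟨?_, ?_⟩
    · rw [mem_closedBall]
      refine (key1 x p).trans ((dist_triangle x q p).trans ?_)
      have := mem_ball.1 hqb
      linarith
    · have h1 := key2 x q
      have h2 := hφ.dist_le_mul (WithLp.ofLp (L q)).1 (WithLp.ofLp (L x)).1
      have h3 := key1 q x
      rw [dist_comm q x] at h3
      have h4 : (K : ℝ) * dist (WithLp.ofLp (L q)).1 (WithLp.ofLp (L x)).1 ≤ K * t :=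
        mul_le_mul_of_nonneg_left (h3.trans hxq) K.2
      rw [Real.dist_eq] at h1 h2
      rw [hqg] at h2
      calc |(WithLp.ofLp (L x)).2 - φ (WithLp.ofLp (L x)).1|
          ≤ |(WithLp.ofLp (L x)).2 - (WithLp.ofLp (L q)).2|
            + |(WithLp.ofLp (L q)).2 - φ (WithLp.ofLp (L x)).1| := abs_sub_le _ _ _
        _ ≤ (1 + K) * t := by linarith

theorem shift_volume {n : ℕ} {Ω : Set (EuclideanSpace ℝ (Fin n))} (hΩo : IsOpen Ω)
    (hΩb : IsBounded Ω) (hlip : HasLipschitzBoundary Ω) :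
    ∃ C : ℝ, 0 ≤ C ∧ ∀ h, volume {x | x ∈ Ω ∧ x + h ∉ Ω} ≤ ENNReal.ofReal (C * min ‖h‖ 1) := by
  obtain ⟨C, hC, t0, ht0, H⟩ := tube_volume hΩb hlip
  have hvol : volume Ω ≠ ⊤ := hΩb.measure_lt_top.ne
  set t1 := min t0 1 with ht1
  have ht1p : 0 < t1 := lt_min ht0 one_pos
  refine ⟨C.toReal + (volume Ω).toReal / t1, by positivity, fun h => ?_⟩
  rcases le_total ‖h‖ t1 with hh | hh
  · have hh1 : ‖h‖ ≤ 1 := hh.trans (min_le_right _ _)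
    calc _ ≤ volume {x | ∃ q ∈ frontier Ω, dist x q ≤ ‖h‖} :=
          measure_mono fun x hx => segment_meets_frontier hΩo hx.1 hx.2
      _ ≤ C * ENNReal.ofReal ‖h‖ := H _ (hh.trans (min_le_left _ _))
      _ = ENNReal.ofReal (C.toReal * ‖h‖) := by
          rw [ENNReal.ofReal_mul ENNReal.toReal_nonneg, ENNReal.ofReal_toReal hC]
      _ ≤ _ := by
          apply ENNReal.ofReal_le_ofReal
          rw [min_eq_left hh1]
          gcongr
          have : 0 ≤ (volume Ω).toReal / t1 := by positivity
          linarith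
  · calc _ ≤ volume Ω := measure_mono fun x hx => hx.1
      _ = ENNReal.ofReal (volume Ω).toReal := (ENNReal.ofReal_toReal hvol).symm
      _ ≤ _ := by
          apply ENNReal.ofReal_le_ofReal
          have h1 : t1 ≤ min ‖h‖ 1 := le_min hh (min_le_right _ _)
          have h2 : (volume Ω).toReal = (volume Ω).toReal / t1 * t1 := by field_simp
          have h3 : 0 ≤ C.toReal := ENNReal.toReal_nonneg
          rw [h2]
          gcongr
          rw [← h2]; linarith

theorem kernel_integrable (n : ℕ) (hn : 1 ≤ n) (s : ℝ) (hs : s ∈ Set.Ioo (0 : ℝ) 1) :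
    Integrable (fun h : EuclideanSpace ℝ (Fin n) => ‖h‖ ^ (-((n : ℝ) + s)) * min ‖h‖ 1) := by
  have : Nonempty (Fin n) := ⟨⟨0, hn⟩⟩
  have := (integrable_fun_norm_addHaar (E := EuclideanSpace ℝ (Fin n)) volume
    (f := fun r : ℝ => r ^ (-((n : ℝ) + s)) * min r 1)).2
  refine this ?_
  rw [finrank_euclideanSpace_fin, ← Ioc_union_Ioi_eq_Ioi (zero_le_one (α := ℝ))]
  have hcast : ((n - 1 : ℕ) : ℝ) = (n : ℝ) - 1 := by push_cast [Nat.cast_sub hn]; ring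
  refine IntegrableOn.union ?_ ?_
  · have h1 : IntegrableOn (fun r : ℝ => r ^ (-s)) (Ioc 0 1) := by
      have := intervalIntegral.intervalIntegrable_rpow' (r := -s) (a := 0) (b := 1)
        (by linarith [hs.2])
      rwa [intervalIntegrable_iff_integrableOn_Ioc_of_le zero_le_one] at this
    refine h1.congr_fun (fun r hr => ?_) measurableSet_Ioc
    have hr0 : 0 < r := hr.1
    simp only [smul_eq_mul, min_eq_left hr.2]
    rw [← Real.rpow_natCast, hcast, ← mul_assoc, ← Real.rpow_add hr0, ← Real.rpow_add_one hr0.ne']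
    congr 1; ring
  · have h1 : IntegrableOn (fun r : ℝ => r ^ (-1 - s)) (Ioi 1) :=
      integrableOn_Ioi_rpow_of_lt (by linarith [hs.1]) one_pos
    refine h1.congr_fun (fun r hr => ?_) measurableSet_Ioi
    have hr1 : 1 < r := hr
    have hr0 : 0 < r := one_pos.trans hr1
    simp only [smul_eq_mul, min_eq_right hr1.le, mul_one]
    rw [← Real.rpow_natCast, hcast, ← Real.rpow_add hr0]
    congr 1; ring

theorem Ls_compl_lt_top (n : ℕ) (hn : 1 ≤ n) (s : ℝ) (hs : s ∈ Set.Ioo (0 : ℝ) 1)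
    {Ω : Set (EuclideanSpace ℝ (Fin n))} (hΩo : IsOpen Ω) (hΩb : IsBounded Ω)
    (hlip : HasLipschitzBoundary Ω) : Ls n s Ω Ωᶜ < ⊤ := by
  obtain ⟨C, hC, H⟩ := shift_volume hΩo hΩb hlip
  have hmeas : Measurable (fun z : EuclideanSpace ℝ (Fin n) × EuclideanSpace ℝ (Fin n) =>
      {z : EuclideanSpace ℝ (Fin n) × EuclideanSpace ℝ (Fin n) | z.1 ∈ Ω ∧ z.1 + z.2 ∉ Ω}.indicator
        (fun z => ENNReal.ofReal (‖z.2‖ ^ (-((n : ℝ) + s)))) z) := by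
    refine Measurable.indicator (by fun_prop) ?_
    exact (hΩo.measurableSet.preimage measurable_fst).inter
      (hΩo.measurableSet.compl.preimage (measurable_fst.add measurable_snd))
  have e : Ls n s Ω Ωᶜ = ∫⁻ x, ∫⁻ h,
      {z : EuclideanSpace ℝ (Fin n) × EuclideanSpace ℝ (Fin n) | z.1 ∈ Ω ∧ z.1 + z.2 ∉ Ω}.indicator
        (fun z => ENNReal.ofReal (‖z.2‖ ^ (-((n : ℝ) + s)))) (x, h) := by
    rw [Ls, ← lintegral_indicator hΩo.measurableSet]
    refine lintegral_congr fun x => ?_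
    by_cases hx : x ∈ Ω
    · rw [indicator_of_mem hx, ← lintegral_indicator hΩo.measurableSet.compl,
        ← lintegral_add_left_eq_self _ x]
      refine lintegral_congr fun h => ?_
      by_cases hh : x + h ∈ Ω
      · simp [indicator, hx, hh]
      · simp [indicator, hx, hh]
    · simp [indicator, hx]
  rw [e, lintegral_lintegral_swap hmeas.aemeasurable]
  calc _ ≤ ∫⁻ h : EuclideanSpace ℝ (Fin n),
        ENNReal.ofReal C * ENNReal.ofReal (‖h‖ ^ (-((n : ℝ) + s)) * min ‖h‖ 1) := by
        refine lintegral_mono fun h => ?_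
        have hset : MeasurableSet {x | x ∈ Ω ∧ x + h ∉ Ω} :=
          hΩo.measurableSet.inter
            (hΩo.measurableSet.compl.preimage (measurable_id.add_const h))
        have : ∀ x, {z : EuclideanSpace ℝ (Fin n) × EuclideanSpace ℝ (Fin n) |
              z.1 ∈ Ω ∧ z.1 + z.2 ∉ Ω}.indicator
            (fun z => ENNReal.ofReal (‖z.2‖ ^ (-((n : ℝ) + s)))) (x, h) =
            {x | x ∈ Ω ∧ x + h ∉ Ω}.indicator
              (fun _ => ENNReal.ofReal (‖h‖ ^ (-((n : ℝ) + s)))) x := fun x => rfl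
        simp only [this]
        rw [lintegral_indicator hset, setLIntegral_const]
        have hk : 0 ≤ ‖h‖ ^ (-((n : ℝ) + s)) := by positivity
        refine (mul_le_mul_right (H h) _).trans_eq ?_
        rw [← ENNReal.ofReal_mul hk, ← ENNReal.ofReal_mul hC]
        congr 1; ring
    _ = ENNReal.ofReal C * ∫⁻ h : EuclideanSpace ℝ (Fin n),
          ENNReal.ofReal (‖h‖ ^ (-((n : ℝ) + s)) * min ‖h‖ 1) :=
        lintegral_const_mul' _ _ ENNReal.ofReal_ne_top
    _ < ⊤ := ENNReal.mul_lt_top ENNReal.ofReal_lt_top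
        (kernel_integrable n hn s hs).lintegral_lt_top

/-- The kernel measure on the product. -/
noncomputable def nu (n : ℕ) (s : ℝ) :
    Measure (EuclideanSpace ℝ (Fin n) × EuclideanSpace ℝ (Fin n)) :=
  ((volume : Measure (EuclideanSpace ℝ (Fin n))).prod volume).withDensity
    (fun z => ENNReal.ofReal (dist z.1 z.2 ^ (-((n : ℝ) + s))))

instance nu_sigmaFinite (n : ℕ) (s : ℝ) : SigmaFinite (nu n s) := by
  unfold nu; infer_instance

theorem nu_prod (n : ℕ) (s : ℝ) {A B : Set (EuclideanSpace ℝ (Fin n))}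
    (hA : MeasurableSet A) (hB : MeasurableSet B) : nu n s (A ×ˢ B) = Ls n s A B := by
  rw [nu, withDensity_apply _ (hA.prod hB), ← Measure.prod_restrict, Ls, lintegral_prod]
  exact (by fun_prop : Measurable _).aemeasurable

theorem Ls_comm (n : ℕ) (s : ℝ) (A B : Set (EuclideanSpace ℝ (Fin n))) :
    Ls n s A B = Ls n s B A := by
  rw [Ls, lintegral_lintegral_swap, Ls]
  · simp only [dist_comm]
  · exact (by fun_prop : Measurable _).aemeasurable

/-- Interaction set. -/
def SS {V : Type*} (E Ω : Set V) : Set (V × V) :=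
  {z | z.1 ∈ E ∧ z.2 ∉ E ∧ (z.1 ∈ Ω ∨ z.2 ∈ Ω)}

theorem Ps_eq (n : ℕ) (s : ℝ) {E Ω : Set (EuclideanSpace ℝ (Fin n))}
    (hE : MeasurableSet E) (hΩ : MeasurableSet Ω) : Ps n s E Ω = nu n s (SS E Ω) := by
  have h : SS E Ω = ((E ∩ Ω) ×ˢ (Eᶜ ∩ Ω) ∪ (E ∩ Ω) ×ˢ (Eᶜ \ Ω)) ∪ (E \ Ω) ×ˢ (Eᶜ ∩ Ω) := by
    ext ⟨x, y⟩
    simp only [SS, mem_ofPred_eq, mem_union, mem_prod, mem_inter_iff, Set.mem_sdiff, mem_compl_iff]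
    tauto
  have m1 := (hE.inter hΩ).prod (hE.compl.inter hΩ)
  have m2 := (hE.inter hΩ).prod (hE.compl.diff hΩ)
  have m3 := (hE.diff hΩ).prod (hE.compl.inter hΩ)
  rw [h, measure_union _ m3, measure_union _ m2, nu_prod n s (hE.inter hΩ) (hE.compl.inter hΩ),
    nu_prod n s (hE.inter hΩ) (hE.compl.diff hΩ), nu_prod n s (hE.diff hΩ) (hE.compl.inter hΩ), Ps]
  · rw [Set.disjoint_left]
    rintro ⟨x, y⟩ h1 h2
    exact h2.2.2 h1.2.2
  · rw [Set.disjoint_left]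
    rintro ⟨x, y⟩ h1 h2
    rcases h1 with h1 | h1
    · exact h2.1.2 h1.1.2
    · exact h2.1.2 h1.1.2

theorem measure_tendsto {n : ℕ} (m : Measure (EuclideanSpace ℝ (Fin n))) [IsFiniteMeasure m]
    (hm : m ≪ volume) (D : ℕ → Set (EuclideanSpace ℝ (Fin n)))
    (hD : ∀ K, IsBounded K → Tendsto (fun k => volume (D k ∩ K)) atTop (𝓝 0)) :
    Tendsto (fun k => m (D k)) atTop (𝓝 0) := by
  have hfin : ∫⁻ x, m.rnDeriv volume x ≠ ⊤ := (Measure.lintegral_rnDeriv_lt_top m volume).ne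
  have hloc : ∀ K, IsBounded K → Tendsto (fun k => m (D k ∩ K)) atTop (𝓝 0) := by
    intro K hK
    have := tendsto_setLIntegral_zero hfin (hD K hK)
    refine this.congr fun k => ?_
    rw [← withDensity_apply', Measure.withDensity_rnDeriv_eq m volume hm]
  have hout : Tendsto (fun j : ℕ => m (closedBall 0 (j : ℝ))ᶜ) atTop (𝓝 0) := by
    have h := tendsto_measure_iInter_atTop (μ := m)
      (s := fun j : ℕ => (closedBall (0 : EuclideanSpace ℝ (Fin n)) (j : ℝ))ᶜ)
      (fun j => isClosed_closedBall.measurableSet.compl.nullMeasurableSet)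
      (fun i j hij => compl_subset_compl.2 (closedBall_subset_closedBall (by exact_mod_cast hij)))
      ⟨0, measure_ne_top _ _⟩
    rwa [← compl_iUnion, iUnion_closedBall_nat, compl_univ, measure_empty] at h
  rw [ENNReal.tendsto_nhds_zero]
  intro ε hε
  have hε2 : 0 < ε / 2 := ENNReal.half_pos hε.ne'
  obtain ⟨j, hj⟩ := ((ENNReal.tendsto_nhds_zero.1 hout) _ hε2).exists
  filter_upwards [(ENNReal.tendsto_nhds_zero.1 (hloc (closedBall 0 (j : ℝ)) isBounded_closedBall)) _ hε2]
    with k hk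
  calc m (D k) ≤ m (D k ∩ closedBall 0 (j : ℝ) ∪ (closedBall 0 (j : ℝ))ᶜ) :=
        measure_mono fun x hx => by
          by_cases h : x ∈ closedBall 0 (j : ℝ)
          · exact Or.inl ⟨hx, h⟩
          · exact Or.inr h
    _ ≤ _ := measure_union_le _ _
    _ ≤ ε / 2 + ε / 2 := add_le_add hk hj
    _ = ε := ENNReal.add_halves ε

theorem nu_strip_tendsto {n : ℕ} (s : ℝ)
    {W : Set (EuclideanSpace ℝ (Fin n) × EuclideanSpace ℝ (Fin n))}
    (hW : nu n s W < ⊤) (D : ℕ → Set (EuclideanSpace ℝ (Fin n)))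
    (hDm : ∀ k, MeasurableSet (D k))
    (hD : ∀ K, IsBounded K → Tendsto (fun k => volume (D k ∩ K)) atTop (𝓝 0)) :
    Tendsto (fun k => nu n s (W ∩ Prod.fst ⁻¹' D k) + nu n s (W ∩ Prod.snd ⁻¹' D k))
      atTop (𝓝 0) := by
  have : IsFiniteMeasure ((nu n s).restrict W) := ⟨by rwa [Measure.restrict_apply_univ]⟩
  have hac : (nu n s).restrict W ≪ (volume : Measure (EuclideanSpace ℝ (Fin n))).prod volume :=
    Measure.absolutelyContinuous_of_le Measure.restrict_le_self |>.trans
      (withDensity_absolutelyContinuous _ _)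
  have h1 := measure_tendsto (((nu n s).restrict W).map Prod.fst)
    ((hac.map measurable_fst).trans Measure.quasiMeasurePreserving_fst.absolutelyContinuous) D hD
  have h2 := measure_tendsto (((nu n s).restrict W).map Prod.snd)
    ((hac.map measurable_snd).trans Measure.quasiMeasurePreserving_snd.absolutelyContinuous) D hD
  have h := h1.add h2
  rw [add_zero] at h
  refine h.congr fun k => ?_
  rw [Measure.map_apply measurable_fst (hDm k), Measure.map_apply measurable_snd (hDm k),
    Measure.restrict_apply (measurable_fst (hDm k)), Measure.restrict_apply (measurable_snd (hDm k)),
    inter_comm W, inter_comm W]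

theorem SS_measurable {n : ℕ} {E Ω : Set (EuclideanSpace ℝ (Fin n))}
    (hE : MeasurableSet E) (hΩ : MeasurableSet Ω) : MeasurableSet (SS E Ω) :=
  (measurable_fst hE).inter ((measurable_snd hE.compl).inter
    ((measurable_fst hΩ).union (measurable_snd hΩ)))

theorem le_liminf_of_le_add {u δ : ℕ → ℝ≥0∞} {c : ℝ≥0∞} (hδ : Tendsto δ atTop (𝓝 0))
    (h : ∀ k, c ≤ u k + δ k) : c ≤ liminf u atTop := by
  refine ENNReal.le_of_forall_pos_le_add fun ε hε _ => ?_
  rw [← tsub_le_iff_right]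
  refine le_liminf_of_le (by isBoundedDefault) ?_
  filter_upwards [(ENNReal.tendsto_nhds_zero.1 hδ) ε (by exact_mod_cast hε)] with k hk
  rw [tsub_le_iff_right]
  exact (h k).trans (add_le_add le_rfl hk)

theorem limsup_le_of_le_add {u δ : ℕ → ℝ≥0∞} {c : ℝ≥0∞} (hδ : Tendsto δ atTop (𝓝 0))
    (h : ∀ k, u k ≤ c + δ k) : limsup u atTop ≤ c := by
  have h1 : Tendsto (fun k => c + δ k) atTop (𝓝 (c + 0)) := hδ.const_add c
  rw [add_zero] at h1
  rw [← h1.limsup_eq]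
  exact limsup_le_limsup (Eventually.of_forall h)

theorem lsc {n : ℕ} (s : ℝ) {Ω : Set (EuclideanSpace ℝ (Fin n))} (hΩ : MeasurableSet Ω)
    (Ek : ℕ → Set (EuclideanSpace ℝ (Fin n))) (hEk : ∀ k, MeasurableSet (Ek k))
    (E : Set (EuclideanSpace ℝ (Fin n))) (hE : MeasurableSet E) (hconv : LocConv n Ek E) :
    Ps n s E Ω ≤ liminf (fun k => Ps n s (Ek k) Ω) atTop := by
  have hj : ∀ j, nu n s (SS E Ω ∩ spanningSets (nu n s) j) ≤
      liminf (fun k => Ps n s (Ek k) Ω) atTop := by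
    intro j
    have ht := nu_strip_tendsto s (measure_spanningSets_lt_top (nu n s) j)
      (fun k => Ek k ∆ E) (fun k => (hEk k).symmDiff hE) hconv
    refine le_liminf_of_le_add ht fun k => ?_
    rw [Ps_eq n s (hEk k) hΩ]
    refine le_trans (measure_mono ?_) ((measure_union_le _ _).trans
      (add_le_add le_rfl (measure_union_le _ _)))
    rintro ⟨x, y⟩ ⟨⟨hx, hy, hxy⟩, hw⟩
    simp only at hx hy hxy
    by_cases hxk : x ∈ Ek k
    · by_cases hyk : y ∈ Ek k
      · exact Or.inr (Or.inr ⟨hw, Or.inl ⟨hyk, hy⟩⟩)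
      · exact Or.inl ⟨hxk, hyk, hxy⟩
    · exact Or.inr (Or.inl ⟨hw, Or.inr ⟨hx, hxk⟩⟩)
  rw [Ps_eq n s hE hΩ]
  have hU : SS E Ω = ⋃ j, SS E Ω ∩ spanningSets (nu n s) j := by
    rw [← inter_iUnion, iUnion_spanningSets, inter_univ]
  rw [hU, Monotone.measure_iUnion]
  · exact iSup_le hj
  · exact fun i j hij => inter_subset_inter_right _ (monotone_spanningSets _ hij)

theorem limsup_le {n : ℕ} (hn : 1 ≤ n) (s : ℝ) (hs : s ∈ Set.Ioo (0 : ℝ) 1)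
    {Ω : Set (EuclideanSpace ℝ (Fin n))} (hΩo : IsOpen Ω) (hΩb : IsBounded Ω)
    (hΩlip : HasLipschitzBoundary Ω)
    (Ek : ℕ → Set (EuclideanSpace ℝ (Fin n))) (hEk : ∀ k, MeasurableSet (Ek k))
    (hmin : ∀ k, SMinimal n s (Ek k) Ω)
    (E : Set (EuclideanSpace ℝ (Fin n))) (hE : MeasurableSet E) (hconv : LocConv n Ek E)
    (F : Set (EuclideanSpace ℝ (Fin n))) (hF : MeasurableSet F)
    (hFE : volume ((F \ Ω) ∆ (E \ Ω)) = 0) :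
    limsup (fun k => Ps n s (Ek k) Ω) atTop ≤ Ps n s F Ω := by
  have hΩ := hΩo.measurableSet
  have hfin := Ls_compl_lt_top n hn s hs hΩo hΩb hΩlip
  set W : Set (EuclideanSpace ℝ (Fin n) × EuclideanSpace ℝ (Fin n)) := Ω ×ˢ Ωᶜ ∪ Ωᶜ ×ˢ Ω with hWdef
  have hW : nu n s W < ⊤ := by
    refine (measure_union_le _ _).trans_lt ?_
    rw [nu_prod n s hΩ hΩ.compl, nu_prod n s hΩ.compl hΩ, Ls_comm n s Ωᶜ Ω]
    exact ENNReal.add_lt_top.2 ⟨hfin, hfin⟩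
  set N := (F \ Ω) ∆ (E \ Ω) with hN
  have hNm : MeasurableSet N := (hF.diff hΩ).symmDiff (hE.diff hΩ)
  have ht := nu_strip_tendsto s hW (fun k => (Ek k ∆ E) ∪ N)
    (fun k => ((hEk k).symmDiff hE).union hNm) (fun K hK => by
      refine tendsto_of_tendsto_of_tendsto_of_le_of_le tendsto_const_nhds (hconv K hK)
        (fun k => zero_le) (fun k => ?_)
      show volume ((Ek k ∆ E ∪ N) ∩ K) ≤ _
      rw [union_inter_distrib_right]
      refine (measure_union_le _ _).trans ?_
      rw [measure_mono_null inter_subset_left hFE, add_zero])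
  refine limsup_le_of_le_add ht fun k => ?_
  have hFk : MeasurableSet ((F ∩ Ω) ∪ (Ek k \ Ω)) := (hF.inter hΩ).union ((hEk k).diff hΩ)
  have hle := (hmin k).2 ((F ∩ Ω) ∪ (Ek k \ Ω)) hFk (by
    have : ((F ∩ Ω) ∪ (Ek k \ Ω)) \ Ω = Ek k \ Ω := by
      ext x; simp only [Set.mem_sdiff, mem_union, mem_inter_iff]; tauto
    rw [this, symmDiff_self]; simp)
  refine hle.trans ?_
  rw [Ps_eq n s hFk hΩ, Ps_eq n s hF hΩ]
  refine le_trans (measure_mono ?_) ((measure_union_le _ _).trans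
    (add_le_add le_rfl (measure_union_le _ _)))
  have hdiff : ∀ z, z ∉ Ω → (z ∈ F ↔ ¬ z ∈ Ek k) → z ∈ Ek k ∆ E ∪ N := by
    intro z hz h
    simp only [hN, mem_union, mem_symmDiff, Set.mem_sdiff]
    tauto
  rintro ⟨x, y⟩ ⟨hx, hy, hxy⟩
  simp only [mem_union, mem_inter_iff, Set.mem_sdiff] at hx hy hxy
  by_cases hxO : x ∈ Ω
  · have hxF : x ∈ F := by tauto
    by_cases hyO : y ∈ Ω
    · exact Or.inl ⟨hxF, (by tauto : y ∉ F), hxy⟩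
    · by_cases hyF : y ∈ F
      · exact Or.inr (Or.inr ⟨Or.inl ⟨hxO, hyO⟩, hdiff y hyO (by tauto)⟩)
      · exact Or.inl ⟨hxF, hyF, hxy⟩
  · have hyO : y ∈ Ω := by tauto
    have hyF : y ∉ F := by tauto
    by_cases hxF : x ∈ F
    · exact Or.inl ⟨hxF, hyF, hxy⟩
    · exact Or.inr (Or.inl ⟨Or.inr ⟨hxO, hyO⟩, hdiff x hxO (by tauto)⟩)

theorem Ps_diff_lt_top {n : ℕ} (hn : 1 ≤ n) (s : ℝ) (hs : s ∈ Set.Ioo (0 : ℝ) 1)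
    {Ω : Set (EuclideanSpace ℝ (Fin n))} (hΩo : IsOpen Ω) (hΩb : IsBounded Ω)
    (hΩlip : HasLipschitzBoundary Ω)
    (E : Set (EuclideanSpace ℝ (Fin n))) (hE : MeasurableSet E) :
    Ps n s (E \ Ω) Ω < ⊤ := by
  have hΩ := hΩo.measurableSet
  have hfin := Ls_compl_lt_top n hn s hs hΩo hΩb hΩlip
  rw [Ls_comm, ← nu_prod n s hΩ.compl hΩ] at hfin
  rw [Ps_eq n s (hE.diff hΩ) hΩ]
  refine (measure_mono ?_).trans_lt hfin
  rintro ⟨x, y⟩ ⟨hx, hy, hxy⟩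
  exact ⟨hx.2, hxy.resolve_left hx.2⟩

end SMinAux


/-- Theorem 1.11: compactness of `s`-minimal sets in a bounded open set with
Lipschitz boundary: a local-in-measure limit of `s`-minimal sets is `s`-minimal, and the
`s`-perimeters converge. -/
theorem sMinimal_compactness
    (n : ℕ) (hn : 1 ≤ n) (s : ℝ) (hs : s ∈ Set.Ioo (0 : ℝ) 1)
    (Ω : Set (EuclideanSpace ℝ (Fin n))) (hΩo : IsOpen Ω) (hΩb : IsBounded Ω)
    (hΩlip : HasLipschitzBoundary Ω)
    (Ek : ℕ → Set (EuclideanSpace ℝ (Fin n))) (hEk : ∀ k, MeasurableSet (Ek k))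
    (hmin : ∀ k, SMinimal n s (Ek k) Ω)
    (E : Set (EuclideanSpace ℝ (Fin n))) (hE : MeasurableSet E)
    (hconv : LocConv n Ek E) :
    SMinimal n s E Ω ∧
      Tendsto (fun k => Ps n s (Ek k) Ω) atTop (𝓝 (Ps n s E Ω)) := by
  have hlsc := SMinAux.lsc s hΩo.measurableSet Ek hEk E hE hconv
  have hsup := SMinAux.limsup_le hn s hs hΩo hΩb hΩlip Ek hEk hmin E hE hconv
  have hle : liminf (fun k => Ps n s (Ek k) Ω) atTop ≤ limsup (fun k => Ps n s (Ek k) Ω) atTop :=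
    liminf_le_limsup
  refine ⟨⟨?_, fun F hF hFE => hlsc.trans (hle.trans (hsup F hF hFE))⟩, ?_⟩
  · refine (hlsc.trans (hle.trans (hsup (E \ Ω) (hE.diff hΩo.measurableSet) ?_))).trans_lt
      (SMinAux.Ps_diff_lt_top hn s hs hΩo hΩb hΩlip E hE)
    have : (E \ Ω) \ Ω = E \ Ω := by
      ext x; simp only [Set.mem_sdiff]; tauto
    rw [this, symmDiff_self]; simp
  · exact tendsto_of_le_liminf_of_limsup_le hlsc (hsup E hE (by rw [symmDiff_self]; simp))
end

section
/- Let Ω ⊆ ℝ^n be an open set and s ∈ (0,1). Let (E_h) be a sequence of measurable sets, each locally s-minimal in Ω, with E_h →loc E for some measurable set E. Then E is locally s-minimal in Ω and P_s(E,Ω') = lim_{h→∞} P_s(E_h,Ω') for every open Ω' ⊂⊂ Ω. -/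
open MeasureTheory Set Filter Topology Metric Bornology
open scoped ENNReal NNReal symmDiff

def LocSMinimal (n : ℕ) (s : ℝ) (E Ω : Set (EuclideanSpace ℝ (Fin n))) : Prop :=
  ∀ Ω' : Set (EuclideanSpace ℝ (Fin n)), IsOpen Ω' → IsCompact (closure Ω') →
    closure Ω' ⊆ Ω → SMinimal n s E Ω'

abbrev EE (n : ℕ) := EuclideanSpace ℝ (Fin n)

/-- The kernel on the product space. -/
noncomputable def Kn (n : ℕ) (s : ℝ) (p : EE n × EE n) : ℝ≥0∞ :=
  ENNReal.ofReal (dist p.1 p.2 ^ (-((n : ℝ) + s)))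

/-- The interaction measure. -/
noncomputable def nuK (n : ℕ) (s : ℝ) : Measure (EE n × EE n) :=
  ((volume : Measure (EE n)).prod (volume : Measure (EE n))).withDensity (Kn n s)

lemma measurable_Kn (n : ℕ) (s : ℝ) : Measurable (Kn n s) := by
  unfold Kn
  fun_prop

instance (n : ℕ) (s : ℝ) : SigmaFinite (nuK n s) := by
  unfold nuK
  exact SigmaFinite.withDensity_of_ne_top
    (Eventually.of_forall fun _ => ENNReal.ofReal_ne_top)

lemma nuK_ac (n : ℕ) (s : ℝ) : nuK n s ≪ (volume : Measure (EE n)).prod volume :=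
  withDensity_absolutelyContinuous _ _

lemma Ls_eq (n : ℕ) (s : ℝ) (A B : Set (EE n)) :
    Ls n s A B = nuK n s (A ×ˢ B) := by
  unfold nuK Ls
  rw [withDensity_apply', ← Measure.prod_restrict, lintegral_prod]
  · rfl
  · exact (measurable_Kn n s).aemeasurable

lemma Ls_symm (n : ℕ) (s : ℝ) (A B : Set (EE n)) : Ls n s A B = Ls n s B A := by
  unfold Ls
  rw [lintegral_lintegral_swap]
  · simp_rw [dist_comm]
  · exact (measurable_Kn n s).aemeasurable

/-- Pairs with at least one point in `U`. -/
def SU {n : ℕ} (U : Set (EE n)) : Set (EE n × EE n) := {p | p.1 ∈ U ∨ p.2 ∈ U}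

lemma measurableSet_SU {n : ℕ} {U : Set (EE n)} (hU : MeasurableSet U) :
    MeasurableSet (SU U) :=
  (measurable_fst hU).union (measurable_snd hU)

lemma Ps_eq (n : ℕ) (s : ℝ) {E U : Set (EE n)} (hE : MeasurableSet E) (hU : MeasurableSet U) :
    Ps n s E U = nuK n s (SU U ∩ E ×ˢ Eᶜ) := by
  unfold Ps
  simp only [Ls_eq]
  rw [← measure_union, ← measure_union]
  · congr 1
    ext p
    simp only [SU, mem_union, mem_prod, mem_inter_iff, mem_ofPred_eq, Set.mem_sdiff, mem_compl_iff]
    tauto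
  · rw [Set.disjoint_left]
    intro p
    simp only [mem_union, mem_prod, mem_inter_iff, Set.mem_sdiff, mem_compl_iff]
    tauto
  · exact (hE.diff hU).prod (hE.compl.inter hU)
  · rw [Set.disjoint_left]
    intro p
    simp only [mem_prod, mem_inter_iff, Set.mem_sdiff, mem_compl_iff]
    tauto
  · exact (hE.inter hU).prod (hE.compl.diff hU)

/-- Pairs with at least one entry in a set locally tending to zero. -/
lemma tendsto_nuK (n : ℕ) (s : ℝ) {G : Set (EE n × EE n)} (hG : MeasurableSet G)
    (hfin : nuK n s G < ⊤) (D : ℕ → Set (EE n))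
    (hD : ∀ K : Set (EE n), IsBounded K → Tendsto (fun h => volume (D h ∩ K)) atTop (𝓝 0)) :
    Tendsto (fun h => nuK n s (G ∩ SU (D h))) atTop (𝓝 0) := by
  rw [ENNReal.tendsto_nhds_zero]
  intro ε hε
  have hε2 : 0 < ε / 2 := ENNReal.half_pos hε.ne'
  let B : ℕ → Set (EE n) := fun M => ball 0 M
  have hBm : ∀ M, MeasurableSet (B M) := fun M => measurableSet_ball
  have hBmono : Monotone B := fun a b hab => ball_subset_ball (by exact_mod_cast hab)
  have htail : Tendsto (fun M => nuK n s (G \ (B M ×ˢ B M))) atTop (𝓝 0) := by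
    have h := tendsto_measure_iInter_atTop (μ := nuK n s) (s := fun M => G \ (B M ×ˢ B M))
      (fun M => (hG.diff ((hBm M).prod (hBm M))).nullMeasurableSet)
      (fun a b hab => sdiff_subset_sdiff_right (prod_mono (hBmono hab) (hBmono hab)))
      ⟨0, ((measure_mono sdiff_subset).trans_lt hfin).ne⟩
    have h0 : (⋂ M, G \ (B M ×ˢ B M)) = ∅ := by
      ext p
      simp only [mem_iInter, Set.mem_sdiff, mem_prod, mem_empty_iff_false, iff_false, not_forall]
      obtain ⟨M, hM⟩ := exists_nat_gt (max ‖p.1‖ ‖p.2‖)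
      refine ⟨M, fun h => h.2 ⟨?_, ?_⟩⟩
      · simpa [B] using (le_max_left _ _).trans_lt hM
      · simpa [B] using (le_max_right _ _).trans_lt hM
    rw [h0, measure_empty] at h
    exact h
  obtain ⟨M, hM⟩ := ((ENNReal.tendsto_nhds_zero.1 htail) _ hε2).exists
  have hBfin : volume (B M) ≠ ⊤ := measure_ball_lt_top.ne
  have hfinI : ∫⁻ p, G.indicator (Kn n s) p ∂((volume : Measure (EE n)).prod volume) ≠ ⊤ := by
    rw [lintegral_indicator hG]
    unfold nuK at hfin
    rw [withDensity_apply'] at hfin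
    exact hfin.ne
  let T : ℕ → Set (EE n × EE n) := fun h => (D h ∩ B M) ×ˢ B M ∪ B M ×ˢ (D h ∩ B M)
  have hT : Tendsto (((volume : Measure (EE n)).prod (volume : Measure (EE n))) ∘ T) atTop (𝓝 0) := by
    have h1 := hD (B M) isBounded_ball
    have h2 : Tendsto (fun h => volume (D h ∩ B M) * volume (B M)
        + volume (B M) * volume (D h ∩ B M)) atTop (𝓝 0) := by
      have ha := ENNReal.Tendsto.mul_const h1 (Or.inr hBfin)
      have hb := ENNReal.Tendsto.const_mul h1 (Or.inr hBfin)
      simpa using ha.add hb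
    refine tendsto_of_tendsto_of_tendsto_of_le_of_le tendsto_const_nhds h2
      (fun _ => zero_le) (fun h => ?_)
    refine (measure_union_le _ _).trans ?_
    rw [Measure.prod_prod, Measure.prod_prod]
  have hlim := tendsto_setLIntegral_zero hfinI hT
  filter_upwards [(ENNReal.tendsto_nhds_zero.1 hlim) _ hε2] with h hh
  have hsub : G ∩ SU (D h) ⊆ (G \ (B M ×ˢ B M)) ∪ (T h ∩ G) := by
    intro p hp
    by_cases hpB : p ∈ B M ×ˢ B M
    · right
      refine ⟨?_, hp.1⟩
      rcases hp.2 with h' | h'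
      · exact Or.inl ⟨⟨h', hpB.1⟩, hpB.2⟩
      · exact Or.inr ⟨hpB.1, h', hpB.2⟩
    · exact Or.inl ⟨hp.1, hpB⟩
  have hTG : nuK n s (T h ∩ G) ≤ ε / 2 := by
    refine le_trans (le_of_eq ?_) hh
    unfold nuK
    rw [withDensity_apply', lintegral_indicator hG, Measure.restrict_restrict hG, inter_comm]
  calc nuK n s (G ∩ SU (D h)) ≤ _ := measure_mono hsub
    _ ≤ _ := measure_union_le _ _
    _ ≤ ε / 2 + ε / 2 := add_le_add hM hTG
    _ = ε := ENNReal.add_halves ε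

/-- Lower semicontinuity. -/
lemma nuK_lsc (n : ℕ) (s : ℝ) {S : Set (EE n × EE n)} (hS : MeasurableSet S)
    (Eh : ℕ → Set (EE n)) {E : Set (EE n)} (hE : MeasurableSet E)
    (hconv : LocConv n Eh E) {c : ℝ≥0∞} (hc : c < nuK n s (S ∩ E ×ˢ Eᶜ)) :
    ∀ᶠ h in atTop, c < nuK n s (S ∩ Eh h ×ˢ (Eh h)ᶜ) := by
  obtain ⟨G, hGm, hGs, hcG, hGf⟩ :=
    Measure.exists_subset_measure_lt_top (hS.inter (hE.prod hE.compl)) hc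
  have hlim := tendsto_nuK n s hGm hGf (fun h => Eh h ∆ E) hconv
  have hpos : 0 < nuK n s G - c := tsub_pos_of_lt hcG
  filter_upwards [hlim.eventually_lt_const hpos] with h hh
  have hsub : G ⊆ (S ∩ Eh h ×ˢ (Eh h)ᶜ) ∪ (G ∩ SU (Eh h ∆ E)) := by
    intro p hp
    have h1 := hGs hp
    by_cases hp2 : p ∈ SU (Eh h ∆ E)
    · exact Or.inr ⟨hp, hp2⟩
    · left
      simp only [SU, mem_ofPred_eq, mem_symmDiff, mem_inter_iff, mem_prod, mem_compl_iff] at *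
      tauto
  have h2 : nuK n s G ≤ nuK n s (S ∩ Eh h ×ˢ (Eh h)ᶜ) + nuK n s (G ∩ SU (Eh h ∆ E)) :=
    (measure_mono hsub).trans (measure_union_le _ _)
  by_contra hcon
  push Not at hcon
  have h3 : nuK n s (G ∩ SU (Eh h ∆ E)) + c < nuK n s G := lt_tsub_iff_right.1 hh
  have h4 := h2.trans (add_le_add_left hcon _)
  rw [add_comm] at h4
  exact absurd h3 (not_lt.2 h4)

lemma lintegral_radial (n : ℕ) (hn : 1 ≤ n) (s : ℝ) (hs : s ∈ Set.Ioo (0 : ℝ) 1) :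
    ∫⁻ z : EE n, ENNReal.ofReal (min ‖z‖ 1 * ‖z‖ ^ (-((n : ℝ) + s))) < ⊤ := by
  have : Nonempty (Fin n) := ⟨⟨0, hn⟩⟩
  have : Nontrivial (EE n) := inferInstance
  have hint : Integrable (fun z : EE n => (fun r : ℝ => min r 1 * r ^ (-((n : ℝ) + s))) ‖z‖)
      volume := by
    refine (integrable_fun_norm_addHaar (E := EE n) (F := ℝ) volume
      (f := fun r : ℝ => min r 1 * r ^ (-((n : ℝ) + s)))).2 ?_
    have hI1 : IntegrableOn (fun r : ℝ => r ^ (-s)) (Ioo 0 1) volume :=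
      (intervalIntegral.integrableOn_Ioo_rpow_iff one_pos).2 (by linarith [hs.2])
    have hI1' : IntegrableOn (fun r : ℝ => r ^ (-s)) (Ioc 0 1) volume :=
      (integrableOn_Ioc_iff_integrableOn_Ioo (by simp)).2 hI1
    have hI2 : IntegrableOn (fun r : ℝ => r ^ (-1 - s)) (Ioi 1) volume :=
      integrableOn_Ioi_rpow_of_lt (by linarith [hs.1]) one_pos
    have hpow : ∀ r : ℝ, 0 < r → r ^ (n - 1) * r ^ (-((n : ℝ) + s)) = r ^ (-1 - s) := by
      intro r hr
      rw [← Real.rpow_natCast, ← Real.rpow_add hr]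
      congr 1
      push_cast [Nat.cast_sub hn]
      ring
    rw [← Ioc_union_Ioi_eq_Ioi (zero_le_one (α := ℝ))]
    refine IntegrableOn.union ?_ ?_
    · refine hI1'.congr_fun (fun r hr => ?_) measurableSet_Ioc
      simp only [finrank_euclideanSpace, Fintype.card_fin, smul_eq_mul]
      rw [min_eq_left hr.2, mul_left_comm, hpow r hr.1]
      nth_rewrite 2 [← Real.rpow_one r]
      rw [← Real.rpow_add hr.1]
      congr 1
      ring
    · refine hI2.congr_fun (fun r hr => ?_) measurableSet_Ioi
      have hr' : (1 : ℝ) < r := hr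
      simp only [finrank_euclideanSpace, Fintype.card_fin, smul_eq_mul]
      rw [min_eq_right hr'.le, one_mul, hpow r (by linarith)]
  have h2 := hint.lintegral_lt_top
  exact h2

/-- Existence of a neighbourhood with finite fractional perimeter. -/
lemma exists_nbhd (n : ℕ) (hn : 1 ≤ n) (s : ℝ) (hs : s ∈ Set.Ioo (0 : ℝ) 1)
    {Ω Ω' : Set (EE n)} (hΩ : IsOpen Ω) (hc : IsCompact (closure Ω')) (hsub : closure Ω' ⊆ Ω) :
    ∃ U : Set (EE n), IsOpen U ∧ Ω' ⊆ U ∧ IsCompact (closure U) ∧ closure U ⊆ Ω ∧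
      nuK n s (U ×ˢ Uᶜ) < ⊤ := by
  rcases Ω'.eq_empty_or_nonempty with rfl | hne
  · exact ⟨∅, isOpen_empty, le_rfl, by simp, by simp, by simp⟩
  obtain ⟨δ', hδ', hcth'⟩ := hc.exists_cthickening_subset_open hΩ hsub
  obtain ⟨δ, hδ, hδ1, hcth⟩ : ∃ δ : ℝ, 0 < δ ∧ δ ≤ 1 ∧ cthickening δ (closure Ω') ⊆ Ω :=
    ⟨min δ' 1, lt_min hδ' one_pos, min_le_right _ _,
      (cthickening_mono (min_le_left _ _) _).trans hcth'⟩
  let d : EE n → ℝ := fun x => infDist x Ω'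
  have hdm : Measurable d := (continuous_infDist_pt Ω').measurable
  let V : Set (EE n) := {x | d x < δ}
  have hVm : MeasurableSet V := measurableSet_lt hdm measurable_const
  have hVt : ∀ t : ℝ, {x | d x < t} = thickening t Ω' := by
    intro t
    ext x
    exact (mem_thickening_iff_infDist_lt hne).symm
  have hclosure : ∀ t, t ≤ δ → closure {x | d x < t} ⊆ cthickening δ (closure Ω') := by
    intro t ht
    rw [hVt]
    refine (closure_thickening_subset_cthickening _ _).trans ?_
    rw [cthickening_closure]
    exact cthickening_mono ht _
  have hVfin : volume V < ⊤ := by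
    refine lt_of_le_of_lt (measure_mono (subset_closure.trans (hclosure δ le_rfl))) ?_
    exact hc.cthickening.measure_lt_top
  suffices h : ∃ t ∈ Ioo 0 δ, nuK n s ({x | d x < t} ×ˢ {x | d x < t}ᶜ) < ⊤ by
    obtain ⟨t, ht, hfin⟩ := h
    refine ⟨{x | d x < t}, ?_, ?_, ?_, (hclosure t ht.2.le).trans hcth, hfin⟩
    · rw [hVt]; exact isOpen_thickening
    · rw [hVt]; exact self_subset_thickening ht.1 _
    · exact hc.cthickening.of_isClosed_subset isClosed_closure (hclosure t ht.2.le)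
  by_contra hcon
  push Not at hcon
  let A : Set ((EE n × EE n) × ℝ) := {q | d q.1.1 < q.2 ∧ q.2 ≤ d q.1.2}
  have hA : MeasurableSet A := by
    have hA' : A = {q | d q.1.1 < q.2} ∩ {q | q.2 ≤ d q.1.2} := rfl
    rw [hA']
    refine MeasurableSet.inter (measurableSet_lt ?_ ?_) (measurableSet_le ?_ ?_)
    · exact hdm.comp (measurable_fst.comp measurable_fst)
    · exact measurable_snd
    · exact measurable_snd
    · exact hdm.comp (measurable_snd.comp measurable_fst)
  have htop : ((nuK n s).prod (volume.restrict (Ioo 0 δ))) A = ⊤ := by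
    rw [Measure.prod_apply_symm hA]
    rw [setLIntegral_congr_fun (g := fun _ => ⊤) measurableSet_Ioo]
    · simp [hδ]
    · intro t ht
      have := hcon t ht
      rw [top_le_iff] at this
      have hset : (fun x => (x, t)) ⁻¹' A = {x | d x < t} ×ˢ {x | d x < t}ᶜ := by
        ext p
        simp [A]
      show nuK n s ((fun x => (x, t)) ⁻¹' A) = ⊤
      rw [hset, this]
  have hbound : ∀ p : EE n × EE n, (volume.restrict (Ioo 0 δ)) (Prod.mk p ⁻¹' A) ≤
      (V ×ˢ (univ : Set (EE n))).indicator
        (fun p => ENNReal.ofReal (min (dist p.1 p.2) 1)) p := by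
    intro p
    by_cases hp : p.1 ∈ V
    · rw [indicator_of_mem (by simp [hp])]
      rw [ENNReal.ofReal_min]
      refine le_min ?_ ?_
      · refine (Measure.restrict_apply_le _ _).trans ?_
        refine (measure_mono (t := Ioc (d p.1) (d p.2)) (fun t ht => ht)).trans ?_
        rw [Real.volume_Ioc]
        apply ENNReal.ofReal_le_ofReal
        have := infDist_le_infDist_add_dist (s := Ω') (x := p.2) (y := p.1)
        rw [dist_comm] at this
        simp only [d]
        linarith
      · refine (measure_mono (subset_univ _)).trans ?_
        rw [Measure.restrict_apply_univ, Real.volume_Ioo]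
        exact ENNReal.ofReal_le_ofReal (by linarith)
    · have : (volume.restrict (Ioo 0 δ)) (Prod.mk p ⁻¹' A) = 0 := by
        rw [Measure.restrict_apply (measurable_prodMk_left hA)]
        convert measure_empty (μ := (volume : Measure ℝ))
        ext t
        simp only [V, mem_ofPred_eq, not_lt] at hp
        simp only [A, mem_inter_iff, mem_preimage, mem_ofPred_eq, mem_Ioo, mem_empty_iff_false,
          iff_false]
        intro h
        linarith [h.1.1, h.2.2]
      rw [this]
      exact zero_le
  have hlt : ((nuK n s).prod (volume.restrict (Ioo 0 δ))) A < ⊤ := by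
    rw [Measure.prod_apply hA]
    refine (lintegral_mono hbound).trans_lt ?_
    have hm : Measurable (fun p : EE n × EE n => ENNReal.ofReal (min (dist p.1 p.2) 1)) := by
      fun_prop
    unfold nuK
    rw [lintegral_withDensity_eq_lintegral_mul _ (measurable_Kn n s)
      (hm.indicator (hVm.prod MeasurableSet.univ))]
    have heq : (Kn n s * (V ×ˢ (univ : Set (EE n))).indicator
        (fun p => ENNReal.ofReal (min (dist p.1 p.2) 1))) =
        (V ×ˢ (univ : Set (EE n))).indicator
        (fun p => Kn n s p * ENNReal.ofReal (min (dist p.1 p.2) 1)) := by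
      ext p
      by_cases hp : p ∈ V ×ˢ (univ : Set (EE n))
      · simp only [Pi.mul_apply, indicator_of_mem hp]
      · simp only [Pi.mul_apply, indicator_of_notMem hp, mul_zero]
    rw [heq, lintegral_indicator (hVm.prod MeasurableSet.univ), ← Measure.prod_restrict,
      lintegral_prod (fun p => Kn n s p * ENNReal.ofReal (min (dist p.1 p.2) 1))
        ((measurable_Kn n s).mul hm).aemeasurable, Measure.restrict_univ]
    have hin : ∀ x : EE n, ∫⁻ y : EE n, Kn n s (x, y) * ENNReal.ofReal (min (dist x y) 1) =
        ∫⁻ z : EE n, ENNReal.ofReal (min ‖z‖ 1 * ‖z‖ ^ (-((n : ℝ) + s))) := by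
      intro x
      rw [← lintegral_sub_left_eq_self
        (fun z : EE n => ENNReal.ofReal (min ‖z‖ 1 * ‖z‖ ^ (-((n : ℝ) + s)))) x]
      congr 1
      ext y
      rw [Kn, mul_comm, ← ENNReal.ofReal_mul (by positivity), dist_eq_norm]
    simp only [hin]
    rw [setLIntegral_const]
    exact ENNReal.mul_lt_top (lintegral_radial n hn s hs) hVfin
  exact hlt.ne htop

lemma glue_subset {n : ℕ} (F G U : Set (EE n)) :
    SU U ∩ ((F ∩ U) ∪ (G \ U)) ×ˢ ((F ∩ U) ∪ (G \ U))ᶜ ⊆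
      (SU U ∩ F ×ˢ Fᶜ) ∪ ((U ×ˢ Uᶜ ∪ Uᶜ ×ˢ U) ∩ SU ((G ∆ F) \ U)) := by
  rintro ⟨x, y⟩
  simp only [SU, mem_union, mem_prod, mem_inter_iff, mem_ofPred_eq, Set.mem_sdiff,
    mem_compl_iff, mem_symmDiff]
  by_cases hx : x ∈ U <;> by_cases hy : y ∈ U <;>
    simp only [hx, hy, not_true, not_false_iff, and_true, and_false, true_and, false_and,
      or_true, or_false, true_or, false_or] <;> tauto

lemma diff_symm_subset {n : ℕ} (F E : Set (EE n)) {U V : Set (EE n)} (h : V ⊆ U) :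
    (F \ U) ∆ (E \ U) ⊆ (F \ V) ∆ (E \ V) := by
  intro x
  have := @h x
  simp only [Set.mem_sdiff, mem_symmDiff]
  tauto

lemma null_subset {n : ℕ} (F E U V : Set (EE n)) :
    (SU U \ SU V) ∩ F ×ˢ Fᶜ ⊆ ((SU U \ SU V) ∩ E ×ˢ Eᶜ) ∪
      (((F \ V) ∆ (E \ V)) ×ˢ univ ∪ univ ×ˢ ((F \ V) ∆ (E \ V))) := by
  rintro ⟨x, y⟩ ⟨⟨h1, h2⟩, h3, h4⟩
  simp only [SU, mem_union, mem_prod, mem_inter_iff, mem_ofPred_eq, Set.mem_sdiff,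
    mem_compl_iff, mem_symmDiff, mem_univ, not_or] at *
  by_cases hx : x ∈ E <;> by_cases hy : y ∈ E <;> simp [*]

set_option maxHeartbeats 1000000 in
lemma core (n : ℕ) (hn : 1 ≤ n) (s : ℝ) (hs : s ∈ Set.Ioo (0 : ℝ) 1)
    (Ω : Set (EE n)) (hΩ : IsOpen Ω)
    (Eh : ℕ → Set (EE n)) (hEh : ∀ h, MeasurableSet (Eh h))
    (hmin : ∀ h, LocSMinimal n s (Eh h) Ω)
    (E : Set (EE n)) (hE : MeasurableSet E) (hconv : LocConv n Eh E)
    (Ω' : Set (EE n)) (ho : IsOpen Ω') (hc : IsCompact (closure Ω')) (hsub : closure Ω' ⊆ Ω) :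
    SMinimal n s E Ω' ∧ Tendsto (fun h => Ps n s (Eh h) Ω') atTop (𝓝 (Ps n s E Ω')) := by
  obtain ⟨U, hUo, hΩU, hUc, hUΩ, hUfin⟩ := exists_nbhd n hn s hs hΩ hc hsub
  have hUm := hUo.measurableSet
  have hΩm := ho.measurableSet
  let J : Set (EE n × EE n) → Set (EE n) → ℝ≥0∞ := fun S F => nuK n s (S ∩ F ×ˢ Fᶜ)
  have hPU : ∀ F, MeasurableSet F → Ps n s F U = J (SU U) F := fun F hF => Ps_eq n s hF hUm
  have hPΩ : ∀ F, MeasurableSet F → Ps n s F Ω' = J (SU Ω') F := fun F hF => Ps_eq n s hF hΩm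
  let T : Set (EE n × EE n) := SU U \ SU Ω'
  have hTm : MeasurableSet T := (measurableSet_SU hUm).diff (measurableSet_SU hΩm)
  have hSS : SU Ω' ⊆ SU U := fun p hp => hp.imp (fun h => hΩU h) (fun h => hΩU h)
  have hsplit : ∀ F, MeasurableSet F → J (SU U) F = J (SU Ω') F + J T F := by
    intro F hF
    simp only [J]
    rw [← measure_union]
    · congr 1
      rw [← union_inter_distrib_right, union_sdiff_cancel hSS]
    · exact (disjoint_sdiff_self_right).mono inter_subset_left inter_subset_left
    · exact hTm.inter (hF.prod hF.compl)
  let W : Set (EE n × EE n) := U ×ˢ Uᶜ ∪ Uᶜ ×ˢ U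
  have hWm : MeasurableSet W := (hUm.prod hUm.compl).union (hUm.compl.prod hUm)
  have hUfin' : nuK n s (Uᶜ ×ˢ U) < ⊤ := by
    rw [← Ls_eq, Ls_symm, Ls_eq]; exact hUfin
  have hWfin : nuK n s W < ⊤ :=
    (measure_union_le _ _).trans_lt (ENNReal.add_lt_top.2 ⟨hUfin, hUfin'⟩)
  have hEhfin : ∀ h, J (SU U) (Eh h) ≤ nuK n s W := by
    intro h
    have hFm : MeasurableSet (Eh h \ U) := (hEh h).diff hUm
    have h1 := (hmin h U hUo hUc hUΩ).2 (Eh h \ U) hFm (by simp)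
    rw [hPU _ (hEh h), hPU _ hFm] at h1
    refine h1.trans (measure_mono ?_)
    intro p
    simp only [SU, W, mem_union, mem_prod, mem_inter_iff, mem_ofPred_eq, Set.mem_sdiff, mem_compl_iff]
    tauto
  have hlsc : ∀ S, MeasurableSet S → ∀ c < J S E, ∀ᶠ h in atTop, c < J S (Eh h) :=
    fun S hS c hcS => nuK_lsc n s hS Eh hE hconv hcS
  have hEfin : J (SU U) E < ⊤ := by
    refine lt_of_le_of_lt ?_ hWfin
    refine le_of_forall_lt fun c hcJ => ?_
    obtain ⟨h, hh⟩ := (hlsc _ (measurableSet_SU hUm) c hcJ).exists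
    exact hh.trans_le (hEhfin h)
  have hupper : ∀ F, MeasurableSet F → volume ((F \ U) ∆ (E \ U)) = 0 →
      ∃ a : ℕ → ℝ≥0∞, Tendsto a atTop (𝓝 0) ∧ ∀ h, J (SU U) (Eh h) ≤ J (SU U) F + a h := by
    intro F hF hFE
    let D : ℕ → Set (EE n) := fun h => (Eh h ∆ F) \ U
    have hD : ∀ K : Set (EE n), IsBounded K →
        Tendsto (fun h => volume (D h ∩ K)) atTop (𝓝 0) := by
      intro K hK
      refine tendsto_of_tendsto_of_tendsto_of_le_of_le tendsto_const_nhds (hconv K hK)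
        (fun _ => zero_le) (fun h => ?_)
      have hs1 : D h ∩ K ⊆ ((Eh h ∆ E) ∩ K) ∪ ((F \ U) ∆ (E \ U)) := by
        intro x
        simp only [D, mem_union, mem_inter_iff, Set.mem_sdiff, mem_symmDiff]
        tauto
      refine (measure_mono hs1).trans ((measure_union_le _ _).trans ?_)
      rw [hFE, add_zero]
    refine ⟨fun h => nuK n s (W ∩ SU (D h)), tendsto_nuK n s hWm hWfin D hD, fun h => ?_⟩
    let Fh : Set (EE n) := (F ∩ U) ∪ (Eh h \ U)
    have hFh : MeasurableSet Fh := (hF.inter hUm).union ((hEh h).diff hUm)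
    have h1 := (hmin h U hUo hUc hUΩ).2 Fh hFh (by
      have : Fh \ U = Eh h \ U := by
        ext x
        simp only [Fh, mem_union, mem_inter_iff, Set.mem_sdiff]
        tauto
      simp [this])
    rw [hPU _ (hEh h), hPU _ hFh] at h1
    refine h1.trans ((measure_mono ?_).trans (measure_union_le _ _))
    exact glue_subset F (Eh h) U
  have hminU : ∀ F, MeasurableSet F → volume ((F \ U) ∆ (E \ U)) = 0 →
      J (SU U) E ≤ J (SU U) F := by
    intro F hF hFE
    obtain ⟨a, ha, hle⟩ := hupper F hF hFE
    refine le_of_forall_lt_imp_le_of_dense fun c hcJ => ?_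
    have hlim : Tendsto (fun h => J (SU U) F + a h) atTop (𝓝 (J (SU U) F)) := by
      simpa using ha.const_add (J (SU U) F)
    refine ge_of_tendsto hlim ?_
    filter_upwards [hlsc _ (measurableSet_SU hUm) c hcJ] with h hh
    exact hh.le.trans (hle h)
  have hPQ := hsplit E hE
  have hPfin : J (SU Ω') E ≠ ⊤ := (lt_of_le_of_lt (by rw [hPQ]; exact le_self_add) hEfin).ne
  have hQfin : J T E ≠ ⊤ := (lt_of_le_of_lt (by rw [hPQ]; exact le_add_self) hEfin).ne
  refine ⟨⟨?_, ?_⟩, ?_⟩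
  · rw [hPΩ E hE]; exact hPfin.lt_top
  · intro F hF hFE
    rw [hPΩ E hE, hPΩ F hF]
    have hN : volume ((F \ U) ∆ (E \ U)) = 0 := by
      refine measure_mono_null ?_ hFE
      exact diff_symm_subset F E hΩU
    have h1 := hminU F hF hN
    rw [hsplit E hE, hsplit F hF] at h1
    have hQ : J T F ≤ J T E := by
      let N := (F \ Ω') ∆ (E \ Ω')
      have hs1 : T ∩ F ×ˢ Fᶜ ⊆ (T ∩ E ×ˢ Eᶜ) ∪ (N ×ˢ univ ∪ univ ×ˢ N) := by
        exact null_subset F E U Ω'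
      have hz : nuK n s (N ×ˢ univ ∪ univ ×ˢ N) = 0 := by
        apply nuK_ac n s
        refine measure_union_null ?_ ?_
        · rw [Measure.prod_prod, hFE, zero_mul]
        · rw [Measure.prod_prod, hFE, mul_zero]
      refine (measure_mono hs1).trans ((measure_union_le _ _).trans ?_)
      rw [hz, add_zero]
    exact (ENNReal.add_le_add_iff_right hQfin).1 (h1.trans (by gcongr))
  · rw [hPΩ E hE]
    simp only [fun h => hPΩ (Eh h) (hEh h)]
    obtain ⟨a, ha, hle⟩ := hupper E hE (by simp)
    refine tendsto_order.2 ⟨hlsc _ (measurableSet_SU hΩm), fun c hcP => ?_⟩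
    obtain ⟨e, he0, hetop, hec⟩ : ∃ e : ℝ≥0∞, 0 < e ∧ e ≠ ⊤ ∧ J (SU Ω') E + e + e ≤ c := by
      refine ⟨min ((c - J (SU Ω') E) / 2) 1,
        lt_min (ENNReal.half_pos (tsub_pos_of_lt hcP).ne') one_pos,
        ((min_le_right _ _).trans_lt ENNReal.one_lt_top).ne, ?_⟩
      calc J (SU Ω') E + min ((c - J (SU Ω') E) / 2) 1 + min ((c - J (SU Ω') E) / 2) 1
          ≤ J (SU Ω') E + (c - J (SU Ω') E) / 2 + (c - J (SU Ω') E) / 2 := by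
            gcongr <;> exact min_le_left _ _
        _ = c := by rw [add_assoc, ENNReal.add_halves, add_tsub_cancel_of_le hcP.le]
    have hQlow : ∀ᶠ h in atTop, J T E ≤ J T (Eh h) + e := by
      by_cases hQ0 : J T E = 0
      · simp [hQ0]
      · have : J T E - e < J T E := ENNReal.sub_lt_self hQfin hQ0 he0.ne'
        filter_upwards [hlsc T hTm _ this] with h hh
        exact tsub_le_iff_right.1 hh.le
    filter_upwards [hQlow, ha.eventually_lt_const he0] with h h1 h2
    have h3 := hle h
    rw [hsplit E hE, hsplit _ (hEh h)] at h3
    have hQhfin : J T (Eh h) ≠ ⊤ := by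
      refine (lt_of_le_of_lt ?_ hWfin).ne
      refine le_trans ?_ (hEhfin h)
      rw [hsplit _ (hEh h)]
      exact le_add_self
    have h4 : J (SU Ω') (Eh h) + J T (Eh h) ≤ (J (SU Ω') E + e + a h) + J T (Eh h) := by
      refine h3.trans ?_
      calc J (SU Ω') E + J T E + a h ≤ J (SU Ω') E + (J T (Eh h) + e) + a h := by gcongr
        _ = _ := by ring
    have h5 := (ENNReal.add_le_add_iff_right hQhfin).1 h4
    refine (h5.trans_lt ?_).trans_le hec
    exact ENNReal.add_lt_add_left (ENNReal.add_ne_top.2 ⟨hPfin, hetop⟩) h2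

/-- Corollary 1.12: compactness of locally `s`-minimal sets in any open set:
a local-in-measure limit of locally `s`-minimal sets is locally `s`-minimal, and the
`s`-perimeters converge in every compactly contained open subset. -/
theorem locSMinimal_compactness
    (n : ℕ) (hn : 1 ≤ n) (s : ℝ) (hs : s ∈ Set.Ioo (0 : ℝ) 1)
    (Ω : Set (EuclideanSpace ℝ (Fin n))) (hΩ : IsOpen Ω)
    (Eh : ℕ → Set (EuclideanSpace ℝ (Fin n))) (hEh : ∀ h, MeasurableSet (Eh h))
    (hmin : ∀ h, LocSMinimal n s (Eh h) Ω)
    (E : Set (EuclideanSpace ℝ (Fin n))) (hE : MeasurableSet E)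
    (hconv : LocConv n Eh E) :
    LocSMinimal n s E Ω ∧
      ∀ Ω' : Set (EuclideanSpace ℝ (Fin n)), IsOpen Ω' → IsCompact (closure Ω') →
        closure Ω' ⊆ Ω →
        Tendsto (fun h => Ps n s (Eh h) Ω') atTop (𝓝 (Ps n s E Ω')) := by
  exact ⟨fun Ω' ho hc hsub =>
      (core n hn s hs Ω hΩ Eh hEh hmin E hE hconv Ω' ho hc hsub).1,
    fun Ω' ho hc hsub =>
      (core n hn s hs Ω hΩ Eh hEh hmin E hE hconv Ω' ho hc hsub).2⟩
end

section
/- Let s ∈ (0,1) and let A_k, B_k, A, B ⊆ ℝ^n be measurable sets with A_k →loc A, B_k →loc B, and such that A, B are disjoint and each pair A_k, B_k is disjoint. Then L_s(A,B) ≤ liminf_{k→∞} L_s(A_k,B_k). In particular, if E_k →loc E and Ω_k →loc Ω with Ω_k, Ω open, then P_s(E,Ω) ≤ liminf_{k→∞} P_s(E_k,Ω_k). -/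
open MeasureTheory Set Filter Topology Metric Bornology
open scoped ENNReal NNReal symmDiff

lemma aux_LsEq (n : ℕ) (s : ℝ) (A B : Set (EuclideanSpace ℝ (Fin n))) :
    Ls n s A B = ∫⁻ z in A ×ˢ B, ENNReal.ofReal (dist z.1 z.2 ^ (-((n : ℝ) + s)))
      ∂((volume : Measure (EuclideanSpace ℝ (Fin n))).prod volume) := by
  unfold Ls
  rw [← Measure.prod_restrict, lintegral_prod]
  fun_prop

lemma aux_part1 {X : Type*} [MeasurableSpace X] (μ : Measure X) [SFinite μ]
    (K : ℕ → Set X) (hKm : ∀ N, MeasurableSet (K N)) (hKmono : Monotone K)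
    (hKU : ∀ x, ∃ N, x ∈ K N) (hKf : ∀ N, μ (K N) ≠ ⊤)
    (f : X × X → ℝ≥0∞) (hf : Measurable f) (hft : ∀ z, f z ≠ ⊤)
    (Ak Bk : ℕ → Set X) (A B : Set X)
    (hA : ∀ N, Tendsto (fun k => μ ((Ak k ∆ A) ∩ K N)) atTop (𝓝 0))
    (hB : ∀ N, Tendsto (fun k => μ ((Bk k ∆ B) ∩ K N)) atTop (𝓝 0)) :
    ∫⁻ z in A ×ˢ B, f z ∂(μ.prod μ) ≤
      liminf (fun k => ∫⁻ z in Ak k ×ˢ Bk k, f z ∂(μ.prod μ)) atTop := by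
  set g : ℕ → X × X → ℝ≥0∞ := fun N => (K N ×ˢ K N).indicator (fun z => min (f z) N) with hg
  have hgm : ∀ N, Measurable (g N) := fun N =>
    (hf.min measurable_const).indicator ((hKm N).prod (hKm N))
  have hgmono : Monotone g := by
    intro N M h z
    simp only [hg]
    refine (indicator_le_indicator_of_subset (prod_mono (hKmono h) (hKmono h))
      (fun _ => zero_le) z).trans ?_
    refine indicator_le_indicator ?_
    gcongr
  have hgf : ∀ N z, g N z ≤ f z := fun N z =>
    (indicator_le_self _ _ z).trans (min_le_left _ _)
  have hsup : ∀ z, f z = ⨆ N, g N z := by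
    intro z
    refine le_antisymm ?_ (iSup_le fun N => hgf N z)
    obtain ⟨N1, h1⟩ := hKU z.1
    obtain ⟨N2, h2⟩ := hKU z.2
    obtain ⟨N3, h3⟩ := ENNReal.exists_nat_gt (hft z)
    refine le_iSup_of_le (max N1 (max N2 N3)) ?_
    have hz : z ∈ K (max N1 (max N2 N3)) ×ˢ K (max N1 (max N2 N3)) :=
      ⟨hKmono (by simp) h1, hKmono (by simp) h2⟩
    simp only [hg]
    rw [indicator_of_mem hz]
    refine le_min le_rfl (h3.le.trans ?_)
    exact_mod_cast (by simp : N3 ≤ max N1 (max N2 N3))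
  have : ∫⁻ z in A ×ˢ B, f z ∂(μ.prod μ) = ⨆ N, ∫⁻ z in A ×ˢ B, g N z ∂(μ.prod μ) := by
    rw [← lintegral_iSup hgm hgmono]
    exact lintegral_congr hsup
  rw [this]
  refine iSup_le fun N => ?_
  set e : ℕ → ℝ≥0∞ := fun k =>
    N * (μ ((Ak k ∆ A) ∩ K N) * μ (K N) + μ (K N) * μ ((Bk k ∆ B) ∩ K N)) with he
  have het : Tendsto e atTop (𝓝 0) := by
    have h1 := ENNReal.Tendsto.mul_const (hA N) (Or.inr (hKf N))
    have h2 := ENNReal.Tendsto.const_mul (hB N) (Or.inr (hKf N))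
    have h3 := ENNReal.Tendsto.const_mul (h1.add h2) (Or.inr (ENNReal.natCast_ne_top N))
    simpa using h3
  have key : ∀ k, ∫⁻ z in A ×ˢ B, g N z ∂(μ.prod μ) - e k ≤
      ∫⁻ z in Ak k ×ˢ Bk k, f z ∂(μ.prod μ) := by
    intro k
    rw [tsub_le_iff_right]
    set S : Set (X × X) := ((Ak k ∆ A) ∩ K N) ×ˢ K N ∪ K N ×ˢ ((Bk k ∆ B) ∩ K N) with hS
    have hsub : A ×ˢ B ⊆ (Ak k ×ˢ Bk k) ∪ (S ∪ (K N ×ˢ K N)ᶜ) := by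
      rintro ⟨x, y⟩ ⟨hx, hy⟩
      simp only [hS, mem_union, mem_prod, mem_inter_iff, mem_compl_iff, mem_symmDiff]
      simp only at hx hy
      tauto
    calc ∫⁻ z in A ×ˢ B, g N z ∂(μ.prod μ)
        ≤ ∫⁻ z in (Ak k ×ˢ Bk k) ∪ (S ∪ (K N ×ˢ K N)ᶜ), g N z ∂(μ.prod μ) :=
          lintegral_mono_set hsub
      _ ≤ ∫⁻ z in (Ak k ×ˢ Bk k), g N z ∂(μ.prod μ) + (∫⁻ z in S, g N z ∂(μ.prod μ)
            + ∫⁻ z in (K N ×ˢ K N)ᶜ, g N z ∂(μ.prod μ)) :=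
          (lintegral_union_le _ _ _).trans (by gcongr; exact lintegral_union_le _ _ _)
      _ ≤ ∫⁻ z in Ak k ×ˢ Bk k, f z ∂(μ.prod μ) + (e k + 0) := by
          gcongr with z
          · exact hgf N z
          · calc ∫⁻ z in S, g N z ∂(μ.prod μ) ≤ ∫⁻ z in S, (N : ℝ≥0∞) ∂(μ.prod μ) :=
                  lintegral_mono fun z => (indicator_le_self _ _ z).trans (min_le_right _ _)
              _ = N * (μ.prod μ) S := by simp
              _ ≤ e k := by
                  simp only [he]
                  gcongr
                  refine (measure_union_le _ _).trans ?_
                  rw [Measure.prod_prod, Measure.prod_prod]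
          · rw [setLIntegral_congr_fun (g := fun _ => 0) ((hKm N).prod (hKm N)).compl]
            · simp
            · intro z hz
              exact indicator_of_notMem hz _
      _ = _ := by rw [add_zero]
  have hlim : Tendsto (fun k => ∫⁻ z in A ×ˢ B, g N z ∂(μ.prod μ) - e k) atTop
      (𝓝 (∫⁻ z in A ×ˢ B, g N z ∂(μ.prod μ))) := by
    simpa using ENNReal.Tendsto.sub (tendsto_const_nhds
      (x := ∫⁻ z in A ×ˢ B, g N z ∂(μ.prod μ))) het (Or.inr ENNReal.zero_ne_top)
  rw [← hlim.liminf_eq]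
  exact liminf_le_liminf (Eventually.of_forall key)

lemma aux_Ls (n : ℕ) (s : ℝ) (Ak Bk : ℕ → Set (EuclideanSpace ℝ (Fin n)))
    (A B : Set (EuclideanSpace ℝ (Fin n))) (hA : LocConv n Ak A) (hB : LocConv n Bk B) :
    Ls n s A B ≤ Filter.liminf (fun k => Ls n s (Ak k) (Bk k)) atTop := by
  simp only [aux_LsEq]
  refine aux_part1 volume (fun N : ℕ => closedBall 0 (N : ℝ)) (fun N => measurableSet_closedBall)
    ?_ ?_ ?_ _ (by fun_prop) (fun z => ENNReal.ofReal_ne_top) Ak Bk A B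
    (fun N => hA _ isBounded_closedBall) (fun N => hB _ isBounded_closedBall)
  · intro N M h
    exact closedBall_subset_closedBall (by exact_mod_cast h)
  · intro x
    obtain ⟨N, hN⟩ := exists_nat_ge (dist x 0)
    exact ⟨N, hN⟩
  · exact fun N => measure_closedBall_lt_top.ne

lemma aux_inter {n : ℕ} {Ak Bk : ℕ → Set (EuclideanSpace ℝ (Fin n))}
    {A B : Set (EuclideanSpace ℝ (Fin n))} (hA : LocConv n Ak A) (hB : LocConv n Bk B) :
    LocConv n (fun k => Ak k ∩ Bk k) (A ∩ B) := by
  intro K hK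
  have h := (hA K hK).add (hB K hK)
  rw [add_zero] at h
  refine tendsto_of_tendsto_of_tendsto_of_le_of_le tendsto_const_nhds h (fun k => zero_le)
    fun k => (measure_mono ?_).trans (measure_union_le _ _)
  intro x
  simp only [mem_union, mem_inter_iff, mem_symmDiff]
  tauto

lemma aux_compl {n : ℕ} {Ak : ℕ → Set (EuclideanSpace ℝ (Fin n))}
    {A : Set (EuclideanSpace ℝ (Fin n))} (hA : LocConv n Ak A) :
    LocConv n (fun k => (Ak k)ᶜ) Aᶜ := by
  intro K hK
  simpa [compl_symmDiff_compl] using hA K hK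

lemma aux_liminf_add (u v : ℕ → ℝ≥0∞) :
    liminf u atTop + liminf v atTop ≤ liminf (fun k => u k + v k) atTop := by
  simp only [liminf_eq_iSup_iInf_of_nat]
  rw [ENNReal.iSup_add_iSup_of_monotone]
  · refine iSup_mono fun i => le_iInf₂ fun j hj => ?_
    exact add_le_add (iInf₂_le j hj) (iInf₂_le j hj)
  all_goals
    intro i j hij
    exact le_iInf₂ fun l hl => iInf₂_le l (hij.trans hl)

/-- Proposition 2.7: lower semicontinuity of the interaction functional `Lₛ`
and of the fractional perimeter with respect to local convergence in measure. -/
theorem Ls_lower_semicontinuous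
    (n : ℕ) (hn : 1 ≤ n) (s : ℝ) (hs : s ∈ Set.Ioo (0 : ℝ) 1) :
    (∀ (Ak Bk : ℕ → Set (EuclideanSpace ℝ (Fin n)))
      (A B : Set (EuclideanSpace ℝ (Fin n))),
      (∀ k, MeasurableSet (Ak k)) → (∀ k, MeasurableSet (Bk k)) →
      MeasurableSet A → MeasurableSet B →
      (∀ k, Disjoint (Ak k) (Bk k)) → Disjoint A B →
      LocConv n Ak A → LocConv n Bk B →
      Ls n s A B ≤ Filter.liminf (fun k => Ls n s (Ak k) (Bk k)) atTop)
    ∧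
    (∀ (Ek Ωk : ℕ → Set (EuclideanSpace ℝ (Fin n)))
      (E Ω : Set (EuclideanSpace ℝ (Fin n))),
      (∀ k, MeasurableSet (Ek k)) → MeasurableSet E →
      (∀ k, IsOpen (Ωk k)) → IsOpen Ω →
      LocConv n Ek E → LocConv n Ωk Ω →
      Ps n s E Ω ≤ Filter.liminf (fun k => Ps n s (Ek k) (Ωk k)) atTop) := by

  refine ⟨fun Ak Bk A B _ _ _ _ _ _ hA hB => aux_Ls n s Ak Bk A B hA hB, ?_⟩
  intro Ek Ωk E Ω _ _ _ _ hE hΩ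
  have hE' := aux_compl hE
  have hΩ' := aux_compl hΩ
  simp only [Ps, sdiff_eq]
  refine le_trans ?_ (aux_liminf_add _ _)
  refine add_le_add (le_trans ?_ (aux_liminf_add _ _))
    (aux_Ls n s _ _ _ _ (aux_inter hE hΩ') (aux_inter hE' hΩ))
  exact add_le_add (aux_Ls n s _ _ _ _ (aux_inter hE hΩ) (aux_inter hE' hΩ))
    (aux_Ls n s _ _ _ _ (aux_inter hE hΩ) (aux_inter hE' hΩ'))
end
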